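/- Let P = {x_0, …, x_{N−1}} be a point set of N points in [0,1)^s, let ε > 0, and let m ∈ ℕ with m ≥ s/ε. If there exists x ∈ [0,1]^s with |Δ(x)| > 2ε, then there exists a grid point y ∈ {0, 1/m, 2/m, …, 1}^s with |Δ(y)| > ε. -/

import Mathlib

open Finset

/-- Local discrepancy of the point set `x` at the corner point `t`:
`Δ(t) = #{n : x_n ∈ [0,t)}/N − ∏_j t_j`. -/
noncomputable def localDisc {N s : ℕ} (x : Fin N → Fin s → ℝ) (t : Fin s → ℝ) : ℝ :=
  ((univ.filter fun n => ∀ j, x n j < t j).card : ℝ) / N - ∏ j, t j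

/-!
Round `t` coordinatewise to the grid, up if `Δ(t) > 0` and down if `Δ(t) < 0`. The counting part of
`Δ` is monotone, so rounding moves it in the favourable direction, while the volume `∏ t_j` is
`1`-Lipschitz on the unit cube for the `ℓ¹` distance and changes by at most `s / m ≤ ε`.
-/

variable {ι R K : Type*}

theorem prod_sub_prod_le_sum_sub [CommRing R] [PartialOrder R] [IsOrderedRing R]
    (S : Finset ι) {a b : ι → R} (ha : ∀ j ∈ S, 0 ≤ a j) (hab : ∀ j ∈ S, a j ≤ b j)
    (hb : ∀ j ∈ S, b j ≤ 1) :
    ∏ j ∈ S, b j - ∏ j ∈ S, a j ≤ ∑ j ∈ S, (b j - a j) := by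
  induction S using Finset.cons_induction with
  | empty => simp
  | cons i S hi ih =>
    simp only [Finset.forall_mem_cons] at ha hab hb
    simp only [Finset.prod_cons, Finset.sum_cons]
    have hprod_le_one : ∏ j ∈ S, b j ≤ 1 :=
      Finset.prod_le_one (fun j hj ↦ (ha.2 j hj).trans (hab.2 j hj)) hb.2
    have hsum_nonneg : 0 ≤ ∑ j ∈ S, (b j - a j) :=
      Finset.sum_nonneg fun j hj ↦ sub_nonneg.2 (hab.2 j hj)
    calc b i * ∏ j ∈ S, b j - a i * ∏ j ∈ S, a j
        = (b i - a i) * ∏ j ∈ S, b j + a i * (∏ j ∈ S, b j - ∏ j ∈ S, a j) := by ring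
      _ ≤ (b i - a i) + a i * ∑ j ∈ S, (b j - a j) :=
        add_le_add (mul_le_of_le_one_right (sub_nonneg.2 hab.1) hprod_le_one)
          (mul_le_mul_of_nonneg_left (ih ha.2 hab.2 hb.2) ha.1)
      _ ≤ (b i - a i) + ∑ j ∈ S, (b j - a j) :=
        add_le_add_right (mul_le_of_le_one_left hsum_nonneg (hab.1.trans hb.1)) _

section BoxDisc

variable [Fintype ι]

/-- The discrepancy `F(t) - ∏_j t_j` between a function `F` of the corner `t` and the volume of the
box `[0,t)`. For `F = boxFreq x` it is, definitionally, the local discrepancy `localDisc x`. -/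
def boxDisc [CommRing R] (F : (ι → R) → R) (t : ι → R) : R :=
  F t - ∏ j, t j

theorem boxDisc_le_boxDisc_add [CommRing R] [PartialOrder R] [IsOrderedRing R]
    {F : (ι → R) → R} (hF : MonotoneOn F (Set.Icc 0 1)) {a b : ι → R} (ha : a ∈ Set.Icc 0 1)
    (hb : b ∈ Set.Icc 0 1) (hab : a ≤ b) {δ : R} (hδ : ∀ j, b j - a j ≤ δ) :
    boxDisc F a ≤ boxDisc F b + Fintype.card ι * δ := by
  have hvolume : ∏ j, b j - ∏ j, a j ≤ Fintype.card ι * δ :=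
    calc ∏ j, b j - ∏ j, a j
        ≤ ∑ j, (b j - a j) :=
          prod_sub_prod_le_sum_sub _ (fun j _ ↦ ha.1 j) (fun j _ ↦ hab j) (fun j _ ↦ hb.2 j)
      _ ≤ Fintype.card ι * δ := by
          simpa using Finset.sum_le_card_nsmul univ _ δ fun j _ ↦ hδ j
  calc F a - ∏ j, a j
      ≤ F b - ∏ j, a j := sub_le_sub_right (hF ha hb hab) _
    _ = F b - ∏ j, b j + (∏ j, b j - ∏ j, a j) := by ring
    _ ≤ F b - ∏ j, b j + Fintype.card ι * δ := add_le_add_right hvolume _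

end BoxDisc

section UnitGrid

variable [Field K] [LinearOrder K] [IsStrictOrderedRing K]

/-- The grid `{0, 1/m, …, 1}^ι` of mesh `1/m` in the unit cube. For `m = 0`, division by zero makes
it the single point `0`. -/
def unitGrid (ι K : Type*) [Field K] (m : ℕ) : Set (ι → K) :=
  {y | ∀ j, ∃ k : ℕ, k ≤ m ∧ y j = (k : K) / m}

theorem unitGrid_subset_Icc (m : ℕ) : unitGrid ι K m ⊆ Set.Icc 0 1 := by
  intro y hy
  refine ⟨fun j ↦ ?_, fun j ↦ ?_⟩ <;> obtain ⟨k, hk, hyk⟩ := hy j <;> rw [hyk]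
  · exact div_nonneg k.cast_nonneg m.cast_nonneg
  · exact div_le_one_of_le₀ (Nat.cast_le.2 hk) m.cast_nonneg

variable [FloorSemiring K] {m : ℕ} {t : ι → K}

theorem exists_mem_unitGrid_le (hm : 0 < m) (ht : t ∈ Set.Icc 0 1) :
    ∃ y ∈ unitGrid ι K m, y ≤ t ∧ ∀ j, t j - y j ≤ 1 / m := by
  have hm' : (0 : K) < m := Nat.cast_pos.2 hm
  refine ⟨fun j ↦ (⌊t j * m⌋₊ : K) / m, fun j ↦ ⟨⌊t j * m⌋₊, ?_, rfl⟩, fun j ↦ ?_, fun j ↦ ?_⟩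
  · exact Nat.floor_le_of_le (mul_le_of_le_one_left hm'.le (ht.2 j))
  · exact (div_le_iff₀ hm').2 (Nat.floor_le (mul_nonneg (ht.1 j) hm'.le))
  · rw [sub_le_iff_le_add', ← add_div, le_div_iff₀ hm']
    exact (Nat.lt_floor_add_one _).le

theorem exists_mem_unitGrid_ge (hm : 0 < m) (ht : t ∈ Set.Icc 0 1) :
    ∃ y ∈ unitGrid ι K m, t ≤ y ∧ ∀ j, y j - t j ≤ 1 / m := by
  have hm' : (0 : K) < m := Nat.cast_pos.2 hm
  refine ⟨fun j ↦ (⌈t j * m⌉₊ : K) / m, fun j ↦ ⟨⌈t j * m⌉₊, ?_, rfl⟩, fun j ↦ ?_, fun j ↦ ?_⟩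
  · exact Nat.ceil_le.2 (mul_le_of_le_one_left hm'.le (ht.2 j))
  · exact (le_div_iff₀ hm').2 (Nat.le_ceil _)
  · rw [sub_le_iff_le_add', div_le_iff₀ hm', add_mul, one_div_mul_cancel hm'.ne']
    exact (Nat.ceil_lt_add_one (mul_nonneg (ht.1 j) hm'.le)).le

theorem exists_mem_unitGrid_abs_boxDisc_le [Fintype ι] {F : (ι → K) → K}
    (hF : MonotoneOn F (Set.Icc 0 1)) (hm : 0 < m) (ht : t ∈ Set.Icc 0 1) :
    ∃ y ∈ unitGrid ι K m, |boxDisc F t| ≤ |boxDisc F y| + Fintype.card ι / m := by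
  rw [← mul_one_div]
  rcases abs_cases (boxDisc F t) with ⟨habs, -⟩ | ⟨habs, -⟩ <;> rw [habs]
  · obtain ⟨y, hy, hty, hmesh⟩ := exists_mem_unitGrid_ge hm ht
    refine ⟨y, hy, (boxDisc_le_boxDisc_add hF ht (unitGrid_subset_Icc m hy) hty hmesh).trans ?_⟩
    exact add_le_add_left (le_abs_self _) _
  · obtain ⟨y, hy, hyt, hmesh⟩ := exists_mem_unitGrid_le hm ht
    refine ⟨y, hy, ?_⟩
    linarith [boxDisc_le_boxDisc_add hF (unitGrid_subset_Icc m hy) ht hyt hmesh,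
      neg_le_abs (boxDisc F y)]

theorem local_disc_grid_general [Fintype ι] {F : (ι → K) → K}
    (hF : MonotoneOn F (Set.Icc 0 1)) {c ε : K} (hε : 0 < ε) (hm : Fintype.card ι / ε ≤ m)
    (ht : t ∈ Set.Icc 0 1) (hlt : c + ε < |boxDisc F t|) :
    ∃ y ∈ unitGrid ι K m, c < |boxDisc F y| := by
  cases isEmpty_or_nonempty ι
  · exact ⟨t, isEmptyElim, (lt_add_of_pos_right c hε).trans hlt⟩
  · have hcard : (0 : K) < Fintype.card ι := Nat.cast_pos.2 Fintype.card_pos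
    have hm_pos : (0 : K) < m := (div_pos hcard hε).trans_le hm
    obtain ⟨y, hy, hle⟩ := exists_mem_unitGrid_abs_boxDisc_le hF (Nat.cast_pos.1 hm_pos) ht
    have herror : (Fintype.card ι : K) / m ≤ ε := (div_le_comm₀ hε hm_pos).1 hm
    exact ⟨y, hy, by linarith⟩

end UnitGrid

/-- The proportion of the points of `x` that lie in the box below the corner `t`, the counting part
of the local discrepancy. -/
noncomputable def boxFreq {N s : ℕ} (x : Fin N → Fin s → ℝ) (t : Fin s → ℝ) : ℝ :=
  ((univ.filter fun n ↦ ∀ j, x n j < t j).card : ℝ) / N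

theorem boxFreq_mono {N s : ℕ} (x : Fin N → Fin s → ℝ) : Monotone (boxFreq x) := by
  intro a b hab
  unfold boxFreq
  gcongr with n _ j
  exact hab j

/-- if `m ≥ s/ε` and `|Δ(x)| > 2ε` for some `x ∈ [0,1]^s`, then there is a
point `y` of the grid `{0, 1/m, …, 1}^s` with `|Δ(y)| > ε`. -/
theorem local_disc_grid {N s : ℕ} (x : Fin N → Fin s → ℝ)
    (hx : ∀ n j, x n j ∈ Set.Ico (0:ℝ) 1) (ε : ℝ) (hε : 0 < ε)
    (m : ℕ) (hm : (s : ℝ) / ε ≤ m)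
    (h : ∃ t : Fin s → ℝ, (∀ j, t j ∈ Set.Icc (0:ℝ) 1) ∧ 2 * ε < |localDisc x t|) :
    ∃ y : Fin s → ℝ, (∀ j, ∃ k : ℕ, k ≤ m ∧ y j = (k : ℝ) / m) ∧
      ε < |localDisc x y| := by
  obtain ⟨t, ht, hlt⟩ := h
  exact local_disc_grid_general ((boxFreq_mono x).monotoneOn _) hε (by simpa using hm)
    ⟨fun j ↦ (ht j).1, fun j ↦ (ht j).2⟩ (two_mul ε ▸ hlt)
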